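/- Let c ∈ ℝ with -1 < c < 0. Then K⁺ \ (W^s(α) ∪ W^s(θ)) = W^s(p) ∪ W^s(f(p)) ∪ W^s(f²(p)). -/

import Mathlib

open Set Filter Topology

/-- The map `f(x,y) = (xy + c, x)`. -/
noncomputable def fc (c : ℝ) : ℝ × ℝ → ℝ × ℝ := fun z => (z.1 * z.2 + c, z.1)

/-- `a₁ = (1 - √(1-4c))/2`. -/
noncomputable def a1 (c : ℝ) : ℝ := (1 - Real.sqrt (1 - 4 * c)) / 2

/-- `a₂ = (1 + √(1-4c))/2`. -/
noncomputable def a2 (c : ℝ) : ℝ := (1 + Real.sqrt (1 - 4 * c)) / 2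

lemma tendsto_of_res (P : ℕ) (hP : 0 < P) (u : ℕ → ℝ) (l : ℝ)
    (h : ∀ r, Tendsto (fun k => u (r + P * k)) atTop (𝓝 l)) : Tendsto u atTop (𝓝 l) := by
  rw [Metric.tendsto_atTop]
  intro ε hε
  have h2 : ∀ r, ∃ K, ∀ k ≥ K, dist (u (r + P * k)) l < ε := fun r =>
    (Metric.tendsto_atTop.1 (h r)) ε hε
  choose K hK using h2
  refine ⟨P * (∑ r ∈ Finset.range P, K r), fun n hn => ?_⟩
  have h3 : n % P < P := Nat.mod_lt _ hP
  have h4 : K (n % P) ≤ ∑ r ∈ Finset.range P, K r :=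
    Finset.single_le_sum (f := K) (fun _ _ => Nat.zero_le _) (Finset.mem_range.2 h3)
  have h5 : ∑ r ∈ Finset.range P, K r ≤ n / P := by
    rw [Nat.le_div_iff_mul_le hP]; linarith [mul_comm P (∑ r ∈ Finset.range P, K r)]
  have := hK (n % P) (n / P) (h4.trans h5)
  rwa [Nat.mod_add_div] at this

lemma conv_of_sign (v : ℕ → ℝ) (M : ℝ) (hM : ∀ n, |v n| ≤ M) (K : ℕ)
    (h : (∀ k ≥ K, v k ≤ v (k+1)) ∨ (∀ k ≥ K, v (k+1) ≤ v k)) :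
    ∃ l, Tendsto v atTop (𝓝 l) := by
  rcases h with h | h
  · have hm : Monotone (fun k => v (k + K)) := monotone_nat_of_le_succ (fun k => by
      have := h (k + K) (by omega)
      rwa [show k + K + 1 = k + 1 + K by ring] at this)
    have hb : BddAbove (range (fun k => v (k + K))) :=
      ⟨M, by rintro _ ⟨k, rfl⟩; exact (abs_le.1 (hM _)).2⟩
    exact ⟨_, (tendsto_add_atTop_iff_nat K).1 (tendsto_atTop_ciSup hm hb)⟩
  · have hm : Antitone (fun k => v (k + K)) := antitone_nat_of_succ_le (fun k => by
      have := h (k + K) (by omega)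
      rwa [show k + K + 1 = k + 1 + K by ring] at this)
    have hb : BddBelow (range (fun k => v (k + K))) :=
      ⟨-M, by rintro _ ⟨k, rfl⟩; exact (abs_le.1 (hM _)).1⟩
    exact ⟨_, (tendsto_add_atTop_iff_nat K).1 (tendsto_atTop_ciInf hm hb)⟩

lemma same_sign_forward (D p q : ℕ → ℝ) (hp : ∀ n, 0 ≤ p n) (hq : ∀ n, 0 ≤ q n)
    (hD : ∀ n, D (n+2) = p n * D n + q n * D (n+1)) (N : ℕ) (h0 : 0 ≤ D N) (h1 : 0 ≤ D (N+1)) :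
    ∀ k, 0 ≤ D (N + k) ∧ 0 ≤ D (N + k + 1) := by
  intro k
  induction k with
  | zero => exact ⟨h0, h1⟩
  | succ k ih =>
    refine ⟨ih.2, ?_⟩
    have := hD (N + k)
    rw [show N + (k+1) + 1 = N + k + 2 by ring, this]
    exact add_nonneg (mul_nonneg (hp _) ih.1) (mul_nonneg (hq _) ih.2)

lemma conv_sub (y p q : ℕ → ℝ) (P : ℕ) (hp : ∀ n, 0 ≤ p n) (hq : ∀ n, 0 ≤ q n)
    (hP : 0 < P) (M : ℝ) (hM : ∀ n, |y n| ≤ M)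
    (hD : ∀ n, y (n+2+2*P) - y (n+2) =
      p n * (y (n+2*P) - y n) + q n * (y (n+1+2*P) - y (n+1))) (n : ℕ) :
    ∃ l, Tendsto (fun k => y (n + 2*P*k)) atTop (𝓝 l) := by
  set D : ℕ → ℝ := fun n => y (n+2*P) - y n with hDdef
  have hD' : ∀ n, D (n+2) = p n * D n + q n * D (n+1) := hD
  have hstep : ∀ k, y (n + 2*P*(k+1)) - y (n+2*P*k) = D (n+2*P*k) := by
    intro k; simp only [hDdef]; congr 2; ring
  have hgrow : ∀ N k, k ≥ N → n + 2*P*k ≥ N := by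
    intro N k hk
    nlinarith
  by_cases hA : ∃ N, 0 ≤ D N ∧ 0 ≤ D (N+1)
  · obtain ⟨N, h0, h1⟩ := hA
    refine conv_of_sign _ M (fun k => hM _) N (Or.inl fun k hk => ?_)
    obtain ⟨j, hj⟩ := Nat.exists_eq_add_of_le (hgrow N k hk)
    have := (same_sign_forward D p q hp hq hD' N h0 h1 j).1
    rw [← hj, ← hstep] at this
    linarith
  by_cases hB : ∃ N, D N ≤ 0 ∧ D (N+1) ≤ 0
  · obtain ⟨N, h0, h1⟩ := hB
    refine conv_of_sign _ M (fun k => hM _) N (Or.inr fun k hk => ?_)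
    obtain ⟨j, hj⟩ := Nat.exists_eq_add_of_le (hgrow N k hk)
    have := (same_sign_forward (fun n => - D n) p q hp hq
      (fun n => by rw [hD' n]; ring) N (by simpa using h0) (by simpa using h1) j).1
    rw [← hj, ← hstep] at this
    linarith
  push Not at hA hB
  have hpos : ∀ m, 0 < D m → 0 < D (m+2) := fun m h => hB (m+1) (hA m h.le).le
  have hneg : ∀ m, D m < 0 → D (m+2) < 0 := fun m h => hA (m+1) (hB m h.le).le
  have hpos' : ∀ m j, 0 < D m → 0 < D (m+2*j) := by
    intro m j h
    induction j with
    | zero => simpa using h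
    | succ j ih => exact hpos _ ih
  have hneg' : ∀ m j, D m < 0 → D (m+2*j) < 0 := by
    intro m j h
    induction j with
    | zero => simpa using h
    | succ j ih => exact hneg _ ih
  rcases lt_trichotomy (D n) 0 with h | h | h
  · refine conv_of_sign _ M (fun k => hM _) 0 (Or.inr fun k hk => ?_)
    have := hneg' n (P*k) h
    rw [← mul_assoc, ← hstep] at this
    linarith
  · exact absurd (hB n h.le) (by have := hA n h.ge; linarith)
  · refine conv_of_sign _ M (fun k => hM _) 0 (Or.inl fun k hk => ?_)
    have := hpos' n (P*k) h
    rw [← mul_assoc, ← hstep] at this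
    linarith

lemma limits (c : ℝ) (x s : ℕ → ℝ) (P : ℕ) (hP : 0 < P)
    (hx : ∀ n, x (n+2) = x (n+1) * x n + c) (M : ℝ) (hM : ∀ n, |x n| ≤ M)
    (hs1 : ∀ n, s n * s n = 1) (hs2 : ∀ n, s (n+2) = s (n+1) * s n)
    (hsP : ∀ n, s (n + 2*P) = s n) (hsx : ∀ n, 0 ≤ s n * x n) :
    ∃ L : ℕ → ℝ, (∀ n, Tendsto (fun k => x (n + 2*P*k)) atTop (𝓝 (L n))) ∧
      (∀ n, L (n+2) = L (n+1) * L n + c) ∧ (∀ n, L (n+2*P) = L n) ∧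
      (∀ n, 0 ≤ s n * L n) := by
  have hsPk : ∀ n k, s (n + 2*P*k) = s n := by
    intro n k
    induction k with
    | zero => simp
    | succ k ih => rw [← ih, ← hsP (n+2*P*k)]; congr 1; ring
  have hsa : ∀ n, |s n| = 1 := by
    intro n
    have := hs1 n
    rw [← abs_mul_abs_self] at this
    nlinarith [abs_nonneg (s n)]
  have key : ∀ n, ∃ l, Tendsto (fun k => s (n+2*P*k) * x (n + 2*P*k)) atTop (𝓝 l) := by
    intro n
    refine conv_sub (fun n => s n * x n) (fun n => s (n+1+2*P) * x (n+1+2*P))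
      (fun n => s n * x n) P (fun n => hsx _) hsx hP M
      (fun n => by rw [abs_mul, hsa, one_mul]; exact hM n) ?_ n
    intro n
    have e1 := hx (n + 2*P)
    have e2 := hx n
    rw [show n + 2*P + 2 = n+2+2*P by ring, show n + 2*P + 1 = n+1+2*P by ring] at e1
    simp only [hsP, e1, e2, hs2]
    ring
  choose l hl using key
  have hL : ∀ n, Tendsto (fun k => x (n + 2*P*k)) atTop (𝓝 (s n * l n)) := by
    intro n
    refine ((hl n).const_mul (s n)).congr fun k => ?_
    rw [hsPk, ← mul_assoc, hs1, one_mul]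
  refine ⟨fun n => s n * l n, hL, fun n => ?_, fun n => ?_, fun n => ?_⟩
  · refine tendsto_nhds_unique (hL (n+2)) ?_
    refine (((hL (n+1)).mul (hL n)).add_const c).congr fun k => ?_
    have := hx (n + 2*P*k)
    rw [show n + 2*P*k + 2 = n+2+2*P*k by ring, show n + 2*P*k + 1 = n+1+2*P*k by ring] at this
    exact this.symm
  · refine tendsto_nhds_unique (hL (n+2*P)) ?_
    refine ((tendsto_add_atTop_iff_nat 1).2 (hL n)).congr fun k => ?_
    congr 1; ring
  · rw [← mul_assoc, hs1, one_mul]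
    exact ge_of_tendsto' (hl n) (fun k => hsx _)

lemma fixed_eq (c L : ℝ) (hc : c < 0) (h : L = L * L + c) : L = a1 c ∨ L = a2 c := by
  have h1 := Real.mul_self_sqrt (show (0:ℝ) ≤ 1 - 4 * c by linarith)
  have : (L - a1 c) * (L - a2 c) = 0 := by
    unfold a1 a2
    linear_combination - h - h1 / 4
  rcases mul_eq_zero.1 this with h | h
  · left; linarith
  · right; linarith

noncomputable def cyc (c : ℝ) (n : ℕ) : ℝ := if n % 3 = 2 then 1 + c else -1

def Concl (c : ℝ) (x : ℕ → ℝ) : Prop :=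
  Tendsto x atTop (𝓝 (a1 c)) ∨ Tendsto x atTop (𝓝 (a2 c)) ∨
    ∃ r, Tendsto (fun n => x n - cyc c (n + r)) atTop (𝓝 0)

lemma cyc_add (c : ℝ) (n k : ℕ) : cyc c (n + 3 * k) = cyc c n := by
  unfold cyc; simp [Nat.add_mul_mod_self_left]

lemma Concl.shift {c : ℝ} {x : ℕ → ℝ} (N : ℕ) (h : Concl c (fun n => x (n + N))) :
    Concl c x := by
  rcases h with h | h | ⟨r, h⟩
  · exact Or.inl ((tendsto_add_atTop_iff_nat N).1 h)
  · exact Or.inr (Or.inl ((tendsto_add_atTop_iff_nat N).1 h))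
  · refine Or.inr (Or.inr ⟨r + 2 * N, ?_⟩)
    refine (tendsto_add_atTop_iff_nat N).1 (h.congr fun n => ?_)
    rw [show n + N + (r + 2 * N) = n + r + 3 * N by ring, cyc_add]

lemma caseA (c : ℝ) (hc2 : c < 0) (x : ℕ → ℝ)
    (hx : ∀ n, x (n+2) = x (n+1) * x n + c) (M : ℝ) (hM : ∀ n, |x n| ≤ M)
    (h : ∀ n, 0 ≤ x n) : Concl c x := by
  obtain ⟨L, h1, h2, h3, -⟩ := limits c x (fun _ => 1) 1 one_pos hx M hM (by simp) (by simp)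
    (by simp) (by simpa using h)
  simp only [mul_one] at h1 h3
  have e : ∀ n, L n = L (n+1) := by
    intro n
    have a := h2 n
    have b := h2 (n+1)
    rw [h3] at a b
    rw [show n + 1 + 1 = n + 2 by ring, h3] at b
    linarith [mul_comm (L (n+1)) (L n)]
  have e0 : ∀ n, L n = L 0 := by
    intro n
    induction n with
    | zero => rfl
    | succ n ih => rw [← e, ih]
  have ht : Tendsto x atTop (𝓝 (L 0)) :=
    tendsto_of_res 2 two_pos x _ (fun r => by rw [← e0 r]; exact h1 r)
  have f := h2 0
  rw [e0, e0 (0+1)] at f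
  rcases fixed_eq c _ hc2 f with h | h
  · left; rwa [← h]
  · right; left; rwa [← h]

lemma cycle_unique (κ a b w a' b' w' : ℝ) (hκ : 0 < κ) (ha : 0 < a) (hb : 0 < b)
    (ha' : 0 < a') (hb' : 0 < b') (hw : 0 ≤ w) (hw' : 0 ≤ w')
    (e1 : w = a * b - κ) (e2 : a' = b * w + κ) (e3 : b' = a' * w + κ)
    (e4 : w' = a' * b' - κ) (e5 : a = b' * w' + κ) (e6 : b = a * w' + κ) :
    a = 1 ∧ b = 1 ∧ w = 1 - κ ∧ a' = 1 ∧ b' = 1 ∧ w' = 1 - κ := by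
  have hq : 0 ≤ w * w' := mul_nonneg hw hw'
  have k1 : (1 + w * w') * (a' - a) = κ * (w - w') := by
    have p1 : a' = w * w' * a + κ * (w + 1) := by rw [e6] at e2; linear_combination e2
    have p2 : a = w * w' * a' + κ * (w' + 1) := by rw [e3] at e5; linear_combination e5
    linear_combination p1 - p2
  have hww : w = w' := by
    rcases lt_trichotomy w w' with h | h | h
    · exfalso
      have h1 : a' ≤ a := by
        by_contra hh
        push Not at hh
        nlinarith [mul_pos hκ (sub_pos.2 h), mul_nonneg hq (sub_pos.2 hh).le]
      have h2 : b' ≤ b := by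
        rw [e3, e6]; nlinarith
      nlinarith
    · exact h
    · exfalso
      have h1 : a ≤ a' := by
        by_contra hh
        push Not at hh
        nlinarith [mul_pos hκ (sub_pos.2 h), mul_nonneg hq (sub_pos.2 hh).le]
      have h2 : b ≤ b' := by
        rw [e3, e6]; nlinarith
      nlinarith
  subst hww
  have haa : a' = a := by
    have : (1 + w * w) * (a' - a) = 0 := by rw [k1]; ring
    rcases mul_eq_zero.1 this with h | h
    · nlinarith
    · linarith
  subst haa
  have hbb : b' = b := by rw [e3, e6]
  subst hbb
  have hab : (a' - b') * (1 + w) = 0 := by linear_combination e2 - e3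
  have hab : a' = b' := by
    rcases mul_eq_zero.1 hab with h | h
    · linarith
    · linarith
  subst hab
  have h1 : (a' - 1) * (a' + w) = 0 := by linear_combination (-1 : ℝ) * e1 - e2
  have h2 : a' = 1 := by
    rcases mul_eq_zero.1 h1 with h | h
    · linarith
    · linarith
  subst h2
  refine ⟨rfl, rfl, by linarith, rfl, rfl, by linarith⟩

lemma caseB (c : ℝ) (hc2 : c < 0) (x : ℕ → ℝ)
    (hx : ∀ n, x (n+2) = x (n+1) * x n + c) (M : ℝ) (hM : ∀ n, |x n| ≤ M)
    (h : ∀ k, x (3*k) ≤ 0 ∧ x (3*k+1) ≤ 0 ∧ 0 ≤ x (3*k+2)) : Concl c x := by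
  obtain ⟨L, h1, h2, h3, h4⟩ := limits c x (fun n => if n % 3 = 2 then 1 else -1) 3 (by norm_num)
    hx M hM (by intro n; split_ifs <;> norm_num)
    (by
      intro n
      have : n % 3 = 0 ∨ n % 3 = 1 ∨ n % 3 = 2 := by omega
      rcases this with h | h | h <;> simp [Nat.add_mod, h])
    (by intro n; simp [Nat.add_mod])
    (by
      intro n
      have : n = 3*(n/3) ∨ n = 3*(n/3)+1 ∨ n = 3*(n/3)+2 := by omega
      have hh := h (n/3)
      rcases this with e | e | e
      · have : n % 3 ≠ 2 := by omega
        rw [← e] at hh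
        simp only [this, if_false]; linarith [hh.1]
      · have : n % 3 ≠ 2 := by omega
        rw [← e] at hh
        simp only [this, if_false]; linarith [hh.2.1]
      · have : n % 3 = 2 := by omega
        rw [← e] at hh
        simp only [this, if_true]; linarith [hh.2.2])
  have g0 := h4 0
  have g1 := h4 1
  have g2 := h4 2
  have g3 := h4 3
  have g4 := h4 4
  have g5 := h4 5
  norm_num at g0 g1 g2 g3 g4 g5
  have r0 := h2 0
  have r1 := h2 1
  have r2 := h2 2
  have r3 := h2 3
  have r4 := h2 4
  have r5 := h2 5
  have p0 := h3 0
  have p1 := h3 1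
  norm_num at r0 r1 r2 r3 r4 r5 p0 p1
  rw [p0] at r4 r5
  rw [p1] at r5
  have n0 : L 0 < 0 := by nlinarith
  have n1 : L 1 < 0 := by nlinarith
  have n3 : L 3 < 0 := by nlinarith
  have n4 : L 4 < 0 := by nlinarith
  obtain ⟨q0, q1, q2, q3, q4, q5⟩ := cycle_unique (-c) (-L 0) (-L 1) (L 2) (-L 3) (-L 4) (L 5)
    (by linarith) (by linarith) (by linarith) (by linarith) (by linarith) g2 g5
    (by linarith) (by linarith) (by linarith) (by linarith) (by linarith) (by linarith)
  have hLk : ∀ r k, L (r + 6*k) = L r := by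
    intro r k
    induction k with
    | zero => simp
    | succ k ih => rw [← ih, ← h3 (r + 6*k)]; congr 1
  have hLc : ∀ n, L n = cyc c n := by
    intro n
    have e : n = n % 6 + 6 * (n/6) := by omega
    have hlt : n % 6 < 6 := by omega
    rw [e, hLk, show n % 6 + 6 * (n/6) = n % 6 + 3 * (2 * (n/6)) by ring, cyc_add]
    generalize n % 6 = m at hlt
    interval_cases m <;> norm_num [cyc] <;> linarith
  refine Or.inr (Or.inr ⟨0, ?_⟩)
  refine tendsto_of_res 6 (by norm_num) _ _ (fun r => ?_)
  have := (h1 r).sub_const (cyc c r)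
  rw [hLc, sub_self] at this
  refine this.congr fun k => ?_
  rw [show r + 6 * k + 0 = r + 3 * (2 * k) by ring, cyc_add]

lemma caseC (c : ℝ) (hc1 : -1 < c) (hc2 : c < 0) (x : ℕ → ℝ)
    (hx : ∀ n, x (n+2) = x (n+1) * x n + c)
    (h : ∀ n, c ≤ x n ∧ x n ≤ 0) : Concl c x := by
  set D : ℕ → ℝ := fun n => x (n+1) - x n with hDdef
  have hD : ∀ n, D (n+2) = x (n+1) * (D n + D (n+1)) := by
    intro n
    have a := hx n
    have b := hx (n+1)
    simp only [hDdef]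
    rw [show n + 2 + 1 = n + 1 + 2 by ring, b, show n + 1 + 1 = n + 2 by ring, a]
    ring
  have hκ : 0 < -c := by linarith
  -- one step
  have step : ∀ n A B N : ℝ, 0 ≤ N → |A| ≤ N → |B| ≤ N → ∀ s, c ≤ s → s ≤ 0 →
      |B + s * (A + B)| ≤ N := by
    intro _ A B N hN hA hB s hs1 hs2
    rw [abs_le] at *
    constructor <;> nlinarith
  have stepk : ∀ T N : ℝ, 0 ≤ N → |T| ≤ N → ∀ s, c ≤ s → s ≤ 0 → |s * T| ≤ -c * N := by
    intro T N hN hT s hs1 hs2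
    rw [abs_mul]
    exact mul_le_mul (by rw [abs_of_nonpos hs2]; linarith) hT (abs_nonneg _) hκ.le
  have inv1 : ∀ n N, 0 ≤ N → |D n| ≤ N → |D (n+1)| ≤ N → |D n + D (n+1)| ≤ N →
      |D (n+1)| ≤ N ∧ |D (n+2)| ≤ -c * N ∧ |D (n+1) + D (n+2)| ≤ N := by
    intro n N hN ha hb hab
    refine ⟨hb, ?_, ?_⟩
    · rw [hD]; exact stepk _ N hN hab _ (h _).1 (h _).2
    · rw [hD]; exact step 0 _ _ N hN ha hb _ (h _).1 (h _).2
  have inv3 : ∀ n N, 0 ≤ N → |D n| ≤ N → |D (n+1)| ≤ N → |D n + D (n+1)| ≤ N →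
      |D (n+3)| ≤ -c*N ∧ |D (n+3+1)| ≤ -c * N ∧ |D (n+3) + D (n+3+1)| ≤ -c*N := by
    intro n N hN ha hb hab
    have hle : -c * N ≤ N := by nlinarith
    have hkN : 0 ≤ -c * N := by positivity
    obtain ⟨b1, b2, b3⟩ := inv1 n N hN ha hb hab
    obtain ⟨c1, c2, c3⟩ := inv1 (n+1) N hN b1 (b2.trans hle) b3
    obtain ⟨d1, d2, d3⟩ := inv1 (n+2) N hN (b2.trans hle) (c2.trans hle) c3
    refine ⟨c2, d2, ?_⟩
    have := hD (n+2)
    rw [show n + 3 + 1 = n + 2 + 2 by ring, this]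
    exact step 0 _ _ _ hkN b2 c2 _ (h _).1 (h _).2
  obtain ⟨N, hN, i1, i2, i3⟩ : ∃ N, 0 ≤ N ∧ |D 0| ≤ N ∧ |D 1| ≤ N ∧ |D 0 + D 1| ≤ N :=
    ⟨|D 0| + |D 1|, by positivity, by linarith [abs_nonneg (D 1)],
      by linarith [abs_nonneg (D 0)], abs_add_le _ _⟩
  have hk : ∀ k, |D (3*k)| ≤ (-c)^k*N ∧ |D (3*k+1)| ≤ (-c)^k * N ∧
      |D (3*k) + D (3*k+1)| ≤ (-c)^k*N := by
    intro k
    induction k with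
    | zero => simpa using ⟨i1, i2, i3⟩
    | succ k ih =>
      have := inv3 (3*k) _ (by positivity) ih.1 ih.2.1 ih.2.2
      rw [pow_succ', mul_assoc]
      exact this
  -- x (3k) is Cauchy
  have hd : ∀ k, dist (x (3*k)) (x (3*(k+1))) ≤ (3 * N) * (-c)^k := by
    intro k
    obtain ⟨u1, u2, u3⟩ := hk k
    have hpos : 0 ≤ (-c)^k * N := by positivity
    obtain ⟨b1, b2, b3⟩ := inv1 (3*k) _ hpos u1 u2 u3
    have hle : -c * ((-c)^k * N) ≤ (-c)^k * N := by nlinarith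
    rw [dist_comm, Real.dist_eq]
    have : x (3*(k+1)) - x (3*k) = D (3*k) + (D (3*k+1) + D (3*k+2)) := by
      simp only [hDdef]; ring_nf
    rw [this]
    have := abs_add_le (D (3*k)) (D (3*k+1) + D (3*k+2))
    linarith
  have hcau := cauchySeq_of_le_geometric (-c) (3*N) (by linarith) hd
  obtain ⟨l, hl⟩ := cauchySeq_tendsto_of_complete hcau
  have hgeo : Tendsto (fun k => (-c)^k * N) atTop (𝓝 0) := by
    have := (tendsto_pow_atTop_nhds_zero_of_lt_one hκ.le (by linarith)).mul_const N
    simpa using this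
  have hD0 : Tendsto (fun k => D (3*k)) atTop (𝓝 0) :=
    squeeze_zero_norm (fun k => (hk k).1) hgeo
  have hD1 : Tendsto (fun k => D (3*k) + D (3*k+1)) atTop (𝓝 0) :=
    squeeze_zero_norm (fun k => (hk k).2.2) hgeo
  have t1 : Tendsto (fun k => x (3*k+1)) atTop (𝓝 l) := by
    have := hl.add hD0
    rw [add_zero] at this
    exact this.congr fun k => by simp only [hDdef]; ring
  have t2 : Tendsto (fun k => x (3*k+2)) atTop (𝓝 l) := by
    have := hl.add hD1
    rw [add_zero] at this
    exact this.congr fun k => by simp only [hDdef]; ring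
  have hfix : l = l * l + c :=
    tendsto_nhds_unique t2 (((t1.mul hl).add_const c).congr fun k => (hx _).symm)
  have hx0 : Tendsto x atTop (𝓝 l) := by
    refine tendsto_of_res 3 (by norm_num) _ _ (fun r => ?_)
    have e : r = r % 3 + 3 * (r/3) := by omega
    have base : Tendsto (fun k => x (r % 3 + 3 * k)) atTop (𝓝 l) := by
      have : r % 3 = 0 ∨ r % 3 = 1 ∨ r % 3 = 2 := by omega
      rcases this with h | h | h <;> rw [h]
      · simpa using hl
      · exact t1.congr fun k => by congr 1; ring
      · exact t2.congr fun k => by congr 1; ring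
    refine ((tendsto_add_atTop_iff_nat (r/3)).2 base).congr fun k => ?_
    congr 1; omega
  rcases fixed_eq c _ hc2 hfix with h | h
  · left; rwa [← h]
  · right; left; rwa [← h]

lemma box (c : ℝ) (hc1 : -1 < c) (hc2 : c < 0) (x : ℕ → ℝ)
    (hx : ∀ n, x (n+2) = x (n+1) * x n + c) (N : ℕ)
    (h0 : c ≤ x N ∧ x N ≤ 0) (h1 : c ≤ x (N+1) ∧ x (N+1) ≤ 0) : Concl c x := by
  apply Concl.shift N
  have key : ∀ n, (c ≤ x (n + N) ∧ x (n+N) ≤ 0) ∧ (c ≤ x (n + 1 + N) ∧ x (n+1+N) ≤ 0) := by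
    intro n
    induction n with
    | zero => simpa [add_comm] using ⟨h0, h1⟩
    | succ n ih =>
      refine ⟨ih.2, ?_⟩
      have e := hx (n + N)
      rw [show n + N + 1 = n + 1 + N by ring] at e
      rw [show n + 1 + 1 + N = n + N + 2 by ring, e]
      obtain ⟨⟨p1, p2⟩, p3, p4⟩ := ih
      constructor <;> nlinarith
  refine caseC c hc1 hc2 _ (fun n => ?_) (fun n => (key n).1)
  have e := hx (n + N)
  rw [show n + 2 + N = n + N + 2 by ring, show n + 1 + N = n + N + 1 by ring, e]

lemma caseS (c : ℝ) (hc1 : -1 < c) (hc2 : c < 0) (x : ℕ → ℝ)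
    (hx : ∀ n, x (n+2) = x (n+1) * x n + c) (M : ℝ) (hM : ∀ n, |x n| ≤ M)
    (h0 : x 0 ≤ c) (h1 : x 1 ≤ c) : Concl c x := by
  by_cases hB : ∃ n, x n ≤ c ∧ x (n+1) ≤ c ∧ x (n+2) < 0
  · obtain ⟨n, ha, hb, hw⟩ := hB
    have e2 := hx n
    have e3 := hx (n+1)
    rw [show n + 1 + 1 = n + 2 by ring] at e3
    have hb1 : -1 ≤ x (n+1) := by nlinarith
    have hw1 : c ≤ x (n+2) := by nlinarith
    refine box c hc1 hc2 x hx (n+2) ⟨hw1, hw.le⟩ ?_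
    rw [show n + 2 + 1 = n + 1 + 2 by ring, e3]
    constructor <;> nlinarith
  · push Not at hB
    have key : ∀ k, x (3*k) ≤ c ∧ x (3*k+1) ≤ c := by
      intro k
      induction k with
      | zero => exact ⟨h0, h1⟩
      | succ k ih =>
        have hw := hB _ ih.1 ih.2
        have e3 := hx (3*k+1)
        have e4 := hx (3*k+2)
        rw [show 3*k+1+1 = 3*k+2 by ring, show 3*k+1+2 = 3*k+3 by ring] at e3
        rw [show 3*k+2+1 = 3*k+3 by ring, show 3*k+2+2 = 3*k+4 by ring] at e4
        have q : x (3*k+3) ≤ c := by nlinarith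
        refine ⟨q, ?_⟩
        rw [show 3*(k+1)+1 = 3*k+4 by ring]
        nlinarith
    exact caseB c hc2 x hx M hM (fun k => ⟨(key k).1.trans hc2.le, (key k).2.trans hc2.le,
      hB _ (key k).1 (key k).2⟩)

lemma main_concl (c : ℝ) (hc1 : -1 < c) (hc2 : c < 0) (x : ℕ → ℝ)
    (hx : ∀ n, x (n+2) = x (n+1) * x n + c) (M : ℝ) (hM : ∀ n, |x n| ≤ M) : Concl c x := by
  by_cases hA : ∀ n, 0 ≤ x n
  · exact caseA c hc2 x hx M hM hA
  push Not at hA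
  obtain ⟨n, hn⟩ := hA
  by_cases hB : ∃ m, x m < 0 ∧ 0 ≤ x (m+1)
  · obtain ⟨m, hm, hm1⟩ := hB
    have e2 := hx m
    have e3 := hx (m+1)
    rw [show m + 1 + 1 = m + 2 by ring] at e3
    have q : x (m+2) ≤ c := by nlinarith
    have q' : x (m+1+2) ≤ c := by nlinarith
    apply Concl.shift (m+2)
    refine caseS c hc1 hc2 _ (fun n => ?_) M (fun n => hM _) ?_ ?_
    · have e := hx (n + (m+2))
      rw [show n + 2 + (m+2) = n + (m+2) + 2 by ring, show n + 1 + (m+2) = n + (m+2) + 1 by ring, e]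
    · simpa using q
    · rwa [show 1 + (m+2) = m+1+2 by ring]
  · push Not at hB
    have key : ∀ k, x (n+k) < 0 := by
      intro k
      induction k with
      | zero => exact hn
      | succ k ih => exact hB _ ih
    have k0 := key 0
    have k1 := key 1
    have k2 := key 2
    have k3 := key 3
    have e2 := hx n
    have e3 := hx (n+1)
    rw [show n + 1 + 1 = n + 2 by ring, show n + 1 + 2 = n + 3 by ring] at e3
    exact box c hc1 hc2 x hx (n+2) ⟨by rw [e2]; simp only [add_zero] at k0; nlinarith, k2.le⟩
      ⟨by rw [show n + 2 + 1 = n + 3 by ring, e3]; nlinarith, k3.le⟩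

noncomputable def xs (c : ℝ) (z : ℝ × ℝ) (n : ℕ) : ℝ := ((fc c)^[n] z).2

lemma xs_spec (c : ℝ) (z : ℝ × ℝ) (n : ℕ) : (fc c)^[n] z = (xs c z (n+1), xs c z n) := by
  unfold xs
  rw [Function.iterate_succ_apply']
  simp [fc]

lemma xs_rec (c : ℝ) (z : ℝ × ℝ) (n : ℕ) : xs c z (n+2) = xs c z (n+1) * xs c z n + c := by
  have : xs c z (n+2) = ((fc c)^[n+1] z).1 := by rw [xs_spec]
  rw [this, Function.iterate_succ_apply', xs_spec]
  simp [fc]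

lemma cyc_rec (c : ℝ) (n : ℕ) : cyc c (n+2) = cyc c (n+1) * cyc c n + c := by
  unfold cyc
  have : n % 3 = 0 ∨ n % 3 = 1 ∨ n % 3 = 2 := by omega
  rcases this with h | h | h <;> simp [Nat.add_mod, h]

lemma orbit_cyc (c : ℝ) (r : ℕ) (n : ℕ) :
    (fc c)^[n] (cyc c (r+1), cyc c r) = (cyc c (n+r+1), cyc c (n+r)) := by
  induction n with
  | zero => simp
  | succ n ih =>
    rw [Function.iterate_succ_apply', ih]
    have := cyc_rec c (n+r)
    rw [show n + 1 + r + 1 = n + r + 2 by ring, show n + 1 + r = n + r + 1 by ring, this]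
    rfl

lemma orbit_diff (c : ℝ) (z : ℝ × ℝ) (r : ℕ)
    (h : Tendsto (fun n => xs c z n - cyc c (n + r)) atTop (𝓝 0)) :
    Tendsto (fun n => ‖(fc c)^[n] z - (fc c)^[n] (cyc c (r+1), cyc c r)‖) atTop (𝓝 0) := by
  rw [← tendsto_zero_iff_norm_tendsto_zero]
  have h1 := (tendsto_add_atTop_iff_nat 1).2 h
  have := h1.prodMk_nhds h
  refine this.congr fun n => ?_
  rw [orbit_cyc, xs_spec, Prod.mk_sub_mk, show n + 1 + r = n + r + 1 by ring]

lemma cyc_bd (c : ℝ) (hc1 : -1 < c) (hc2 : c < 0) (n : ℕ) : ‖cyc c n‖ ≤ 1 := by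
  rw [Real.norm_eq_abs, abs_le]
  unfold cyc
  split_ifs <;> constructor <;> linarith

lemma orbit_rev (c : ℝ) (hc1 : -1 < c) (hc2 : c < 0) (z : ℝ × ℝ) (r : ℕ)
    (h : Tendsto (fun n => ‖(fc c)^[n] z - (fc c)^[n] (cyc c (r+1), cyc c r)‖) atTop (𝓝 0)) :
    (∃ M : ℝ, ∀ n : ℕ, ‖(fc c)^[n] z‖ ≤ M) ∧
      ∀ a : ℝ, ¬ Tendsto (fun n => (fc c)^[n] z) atTop (𝓝 (a, a)) := by
  constructor
  · obtain ⟨B, hB⟩ := h.bddAbove_range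
    refine ⟨B + 1, fun n => ?_⟩
    have h1 := hB ⟨n, rfl⟩
    have h2 : ‖(fc c)^[n] (cyc c (r+1), cyc c r)‖ ≤ 1 := by
      rw [orbit_cyc, Prod.norm_mk]
      exact max_le (cyc_bd c hc1 hc2 _) (cyc_bd c hc1 hc2 _)
    have h3 := norm_le_norm_sub_add ((fc c)^[n] z) ((fc c)^[n] (cyc c (r+1), cyc c r))
    simp only at h1
    linarith
  · intro a ha
    rw [← tendsto_zero_iff_norm_tendsto_zero] at h
    have h1 := ha.sub h
    simp only [sub_sub_cancel, sub_zero, orbit_cyc] at h1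
    have h2 : Tendsto (fun n => cyc c (n + r)) atTop (𝓝 a) :=
      (continuous_snd.tendsto _).comp h1
    have h3 : Tendsto (cyc c) atTop (𝓝 a) := (tendsto_add_atTop_iff_nat r).1 h2
    have m3 : Tendsto (fun k : ℕ => 0 + 3 * k) atTop atTop :=
      tendsto_atTop_mono (fun k => by simp only [id]; omega) tendsto_id
    have m3' : Tendsto (fun k : ℕ => 2 + 3 * k) atTop atTop :=
      tendsto_atTop_mono (fun k => by simp only [id]; omega) tendsto_id
    have t0 := h3.comp m3
    have t2 := h3.comp m3'
    simp only [Function.comp_def, cyc_add] at t0 t2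
    have u0 := tendsto_nhds_unique t0 tendsto_const_nhds
    have u2 := tendsto_nhds_unique t2 tendsto_const_nhds
    norm_num [cyc] at u0 u2
    linarith

theorem stmt5 (c : ℝ) (hc1 : -1 < c) (hc2 : c < 0) :
    {z : ℝ × ℝ | ∃ M : ℝ, ∀ n : ℕ, ‖(fc c)^[n] z‖ ≤ M} \
      ({z : ℝ × ℝ | Tendsto (fun n => (fc c)^[n] z) atTop (𝓝 (a1 c, a1 c))} ∪
       {z : ℝ × ℝ | Tendsto (fun n => (fc c)^[n] z) atTop (𝓝 (a2 c, a2 c))}) =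
      {z : ℝ × ℝ | Tendsto (fun n => ‖(fc c)^[n] z - (fc c)^[n] (-1, -1)‖) atTop (𝓝 0)} ∪
      {z : ℝ × ℝ | Tendsto (fun n => ‖(fc c)^[n] z - (fc c)^[n] (1 + c, -1)‖) atTop (𝓝 0)} ∪
      {z : ℝ × ℝ | Tendsto (fun n => ‖(fc c)^[n] z - (fc c)^[n] (-1, 1 + c)‖) atTop (𝓝 0)} := by
  have c0 : ((-1 : ℝ), (-1 : ℝ)) = (cyc c (0+1), cyc c 0) := by simp [cyc]
  have c1 : ((1 + c : ℝ), (-1 : ℝ)) = (cyc c (1+1), cyc c 1) := by simp [cyc]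
  have c2 : ((-1 : ℝ), (1 + c : ℝ)) = (cyc c (2+1), cyc c 2) := by simp [cyc]
  rw [c0, c1, c2]
  ext z
  simp only [Set.mem_sdiff, mem_union, mem_ofPred_eq]
  constructor
  · rintro ⟨⟨M, hM⟩, hn⟩
    have hM' : ∀ n, |xs c z n| ≤ M := fun n => by
      have := (norm_snd_le ((fc c)^[n] z)).trans (hM n)
      exact this
    have lift : ∀ a, Tendsto (xs c z) atTop (𝓝 a) →
        Tendsto (fun n => (fc c)^[n] z) atTop (𝓝 (a, a)) := fun a ha =>
      (((tendsto_add_atTop_iff_nat 1).2 ha).prodMk_nhds ha).congr fun n => (xs_spec c z n).symm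
    rcases main_concl c hc1 hc2 (xs c z) (xs_rec c z) M hM' with h | h | ⟨r, h⟩
    · exact absurd (Or.inl (lift _ h)) hn
    · exact absurd (Or.inr (lift _ h)) hn
    · have h' : Tendsto (fun n => xs c z n - cyc c (n + r % 3)) atTop (𝓝 0) := by
        refine h.congr fun n => ?_
        rw [← cyc_add c (n + r % 3) (r/3)]
        congr 2; omega
      have h3 := orbit_diff c z _ h'
      have : r % 3 = 0 ∨ r % 3 = 1 ∨ r % 3 = 2 := by omega
      rcases this with e | e | e <;> rw [e] at h3
      · exact Or.inl (Or.inl h3)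
      · exact Or.inl (Or.inr h3)
      · exact Or.inr h3
  · intro h
    have : ∃ r, Tendsto (fun n => ‖(fc c)^[n] z - (fc c)^[n] (cyc c (r+1), cyc c r)‖)
        atTop (𝓝 0) := by
      rcases h with (h | h) | h
      · exact ⟨0, h⟩
      · exact ⟨1, h⟩
      · exact ⟨2, h⟩
    obtain ⟨r, h⟩ := this
    obtain ⟨h1, h2⟩ := orbit_rev c hc1 hc2 z r h
    exact ⟨h1, fun h => h.elim (h2 _) (h2 _)⟩
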